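/- arXiv:1907.01240 — 2 statements merged into one kernel-verified Lean document; each statement's English description precedes it below -/
import Mathlib

section
/- For every one-clock timed automaton 𝒜 and every pair of nonterminals (control locations) X, Y of 𝒜, the ternary reachability relation {(u, δ, v) ∈ ℝ≥0 × ℝ≥0 × ℝ≥0 : (X,u) →*(δ) (Y,v)} is definable in existential linear arithmetic. -/
/-!
The reachability relation of a one-clock timed automaton is shown to be definable by factoring
each run at its first and its last assignment of a constant to the clock (`CRun.iff_decomp`).
Let `M` bound all constants of the automaton.

* Before the first and after the last such assignment the clock just grows, so whether the
  segment exists depends only on the regions (with respect to `0, …, M`) of its two end values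
  (`NR.inv`). There are finitely many regions, each definable (`dfn_of_inv`).
* The middle part leads from a location with an integral clock value `k ≤ M` to another such
  configuration, and only the set of its possible durations matters. Reparametrizing time by a
  strictly increasing map `g` with `g 0 = 0` and `g (x + 1) = g x + 1` preserves the regions of
  all differences of instants, hence maps runs to runs (`CRun.warp`). Consequently a non-integral
  duration matters only through its integral part (`crun_half_iff`), and the set of locations and
  regions reachable in time `n + 1` is a function of the set for time `n` (`reachSet_succ`).
  These sets range over a finite set, so the sequence is ultimately periodic, and the set of
  durations is definable with the floor function (`dfn_crun`).

The durations of the parts add up to a linear equation (`dfn_reach`).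
-/

open scoped NNReal

namespace TBPPcore

/-- Comparison operators allowed in clock constraints. -/
inductive Cmp | lt | le | eq | ge | gt

/-- Satisfaction of a comparison between two nonnegative reals. -/
def Cmp.Sat : Cmp → ℝ≥0 → ℝ≥0 → Prop
  | .lt, a, b => a < b
  | .le, a, b => a ≤ b
  | .eq, a, b => a = b
  | .ge, a, b => a ≥ b
  | .gt, a, b => a > b

/-- An atomic clock constraint `x ⋈ k`. -/
structure GuardAtom (C : Type) where
  clock : C
  cmp : Cmp
  bound : ℕ

/-- A clock valuation. -/
abbrev Val (C : Type) := C → ℝ≥0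

/-- A guard is a (finite) conjunction of atomic clock constraints;
the empty list is the trivial constraint `true`. -/
def GuardSat {C : Type} (μ : Val C) (g : List (GuardAtom C)) : Prop :=
  ∀ a ∈ g, a.cmp.Sat (μ a.clock) (a.bound : ℝ≥0)

/-- An assignment `x := e` where `e` is a clock or a natural-number constant. -/
structure Assign (C : Type) where
  lhs : C
  rhs : C ⊕ ℕ

def applyAssign {C : Type} [DecidableEq C] (μ : Val C) (a : Assign C) : Val C :=
  Function.update μ a.lhs (Sum.elim μ (fun k => (k : ℝ≥0)) a.rhs)

/-- Execute a sequence of assignments in order. -/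
def applyUpdates {C : Type} [DecidableEq C] (μ : Val C) (U : List (Assign C)) : Val C :=
  U.foldl applyAssign μ

/-- A rule `A →(φ; U) α`. -/
structure Rule (C X : Type) where
  src : X
  guard : List (GuardAtom C)
  update : List (Assign C)
  rhs : Multiset X

/-- A timed basic parallel process: a finite set of rules whose right-hand
sides have size at most 2 (clocks `C` and nonterminals `X` are type
parameters; finiteness of the nonterminal set is imposed where needed). -/
structure TBPP (C X : Type) where
  rules : Set (Rule C X)
  finite : rules.Finite
  small : ∀ r ∈ rules, Multiset.card r.rhs ≤ 2

/-- A configuration: a finite multiset of processes. -/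
abbrev Config (C X : Type) := Multiset (X × Val C)

/-- Elapse `t` time units in every process of a configuration. -/
def shift {C X : Type} (t : ℝ≥0) (α : Config C X) : Config C X :=
  α.map (fun p => (p.1, fun c => p.2 c + t))

variable {C X : Type} [DecidableEq C]

/-- One transition: either a time elapse or a discrete rule application. -/
inductive Step (B : TBPP C X) : Config C X → ℝ≥0 → Config C X → Prop
  | elapse (α : Config C X) (t : ℝ≥0) : Step B α t (shift t α)
  | discrete (β : Config C X) (r : Rule C X) (μ : Val C)
      (hr : r ∈ B.rules) (hg : GuardSat μ r.guard) :
      Step B (β + {(r.src, μ)}) 0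
        (β + r.rhs.map (fun Y => (Y, applyUpdates μ r.update)))

/-- `Run B α t β`: a finite sequence of transitions from `α` to `β`
whose delays sum to `t`. -/
inductive Run (B : TBPP C X) : Config C X → ℝ≥0 → Config C X → Prop
  | refl (α : Config C X) : Run B α 0 α
  | tail {α β γ : Config C X} {t s : ℝ≥0} :
      Run B α t β → Step B β s γ → Run B α (t + s) γ

/-- `α →* β`. -/
def Reach (B : TBPP C X) (α β : Config C X) : Prop := ∃ t, Run B α t β

/-- Coverability: `α ↝cover β`. -/
def Cover (B : TBPP C X) (α β : Config C X) : Prop :=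
  ∃ γ, Reach B α γ ∧ β ≤ γ

/-- A timed automaton is a TBPP all of whose rules have right-hand side of size 1. -/
def IsTA (B : TBPP C X) : Prop := ∀ r ∈ B.rules, Multiset.card r.rhs = 1

/-- The valuation of a single clock. -/
def cval (u : ℝ≥0) : Val Unit := fun _ => u

end TBPPcore
namespace ELA

/-- Terms over the structure `(ℝ; 0, 1, +, ≤, ⌊·⌋)` with `n` free variables. -/
inductive Term (n : ℕ) : Type
  | var : Fin n → Term n
  | zero : Term n
  | one : Term n
  | add : Term n → Term n → Term n
  | floor : Term n → Term n

noncomputable def Term.eval {n : ℕ} (v : Fin n → ℝ) : Term n → ℝ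
  | .var i => v i
  | .zero => 0
  | .one => 1
  | .add s t => s.eval v + t.eval v
  | .floor t => (⌊t.eval v⌋ : ℝ)

/-- Existential formulas of linear arithmetic: literals `s ≤ t` and
`¬(s ≤ t)`, closed under `∧`, `∨` and existential quantification. -/
inductive Form : ℕ → Type
  | le {n : ℕ} : Term n → Term n → Form n
  | nle {n : ℕ} : Term n → Term n → Form n
  | and {n : ℕ} : Form n → Form n → Form n
  | or {n : ℕ} : Form n → Form n → Form n
  | ex {n : ℕ} : Form (n + 1) → Form n

def Form.Sat : ∀ {n : ℕ}, Form n → (Fin n → ℝ) → Prop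
  | _, .le s t, v => s.eval v ≤ t.eval v
  | _, .nle s t, v => ¬ s.eval v ≤ t.eval v
  | _, .and f g, v => f.Sat v ∧ g.Sat v
  | _, .or f g, v => f.Sat v ∨ g.Sat v
  | _, .ex f, v => ∃ r : ℝ, f.Sat (Fin.snoc v r)

/-- A set `S ⊆ ℝⁿ` is definable in existential linear arithmetic if it is the
set of realizations of an existential formula of linear arithmetic. -/
def Definable (n : ℕ) (S : Set (Fin n → ℝ)) : Prop :=
  ∃ φ : Form n, S = {v | Form.Sat φ v}

end ELA

namespace OneClock

/-! ### Closure properties of existential linear arithmetic -/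

open ELA

/-- `P` is the set of realizations of an existential formula; this is `ELA.Definable` for
predicates instead of sets. -/
def Dfn {n : ℕ} (P : (Fin n → ℝ) → Prop) : Prop :=
  ∃ φ : Form n, ∀ v, φ.Sat v ↔ P v

section Dfn
variable {n : ℕ}

theorem Dfn.congr {P Q : (Fin n → ℝ) → Prop} (h : Dfn P) (e : ∀ v, Q v ↔ P v) : Dfn Q := by
  obtain ⟨φ, hφ⟩ := h
  exact ⟨φ, fun v => (hφ v).trans (e v).symm⟩

theorem dfn_le (s t : ELA.Term n) : Dfn fun v => s.eval v ≤ t.eval v :=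
  ⟨.le s t, fun _ => by simp [Form.Sat]⟩

theorem dfn_lt (s t : ELA.Term n) : Dfn fun v => s.eval v < t.eval v :=
  ⟨.nle t s, fun _ => by simp [Form.Sat]⟩

theorem Dfn.and {P Q : (Fin n → ℝ) → Prop} (hP : Dfn P) (hQ : Dfn Q) :
    Dfn fun v => P v ∧ Q v := by
  obtain ⟨φ, hφ⟩ := hP
  obtain ⟨ψ, hψ⟩ := hQ
  exact ⟨.and φ ψ, fun v => by simp [Form.Sat, hφ, hψ]⟩

theorem Dfn.or {P Q : (Fin n → ℝ) → Prop} (hP : Dfn P) (hQ : Dfn Q) :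
    Dfn fun v => P v ∨ Q v := by
  obtain ⟨φ, hφ⟩ := hP
  obtain ⟨ψ, hψ⟩ := hQ
  exact ⟨.or φ ψ, fun v => by simp [Form.Sat, hφ, hψ]⟩

theorem dfn_eq (s t : ELA.Term n) : Dfn fun v => s.eval v = t.eval v :=
  ((dfn_le s t).and (dfn_le t s)).congr fun _ => le_antisymm_iff

/-- The body of the quantifier is a predicate on `n + 1` variables whose last one is bound. -/
theorem Dfn.ex {P : (Fin n → ℝ) → ℝ → Prop}
    (h : Dfn fun w : Fin (n + 1) → ℝ => P (fun i => w i.castSucc) (w (Fin.last n))) :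
    Dfn fun v => ∃ r, P v r := by
  obtain ⟨φ, hφ⟩ := h
  exact ⟨.ex φ, fun v => by simp [Form.Sat, hφ]⟩

theorem dfn_const (c : Prop) : Dfn fun _ : Fin n → ℝ => c := by
  by_cases h : c
  · exact (dfn_le .zero .zero).congr fun v => by simp [h]
  · exact (dfn_lt .zero .zero).congr fun v => by simp [h]

theorem Dfn.iff_const {P : (Fin n → ℝ) → Prop} (h : Dfn P) (h' : Dfn fun v => ¬ P v)
    (c : Prop) : Dfn fun v => (P v ↔ c) := by
  by_cases hc : c
  · simpa [hc] using h
  · simpa [hc] using h'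

theorem dfn_exists {ι : Type} [Finite ι] {P : ι → (Fin n → ℝ) → Prop}
    (h : ∀ i, Dfn (P i)) : Dfn fun v => ∃ i, P i v := by
  classical
  have := Fintype.ofFinite ι
  have key : ∀ s : Finset ι, Dfn fun v => ∃ i ∈ s, P i v := by
    intro s
    induction s using Finset.induction_on with
    | empty => simpa using dfn_const (n := n) False
    | insert a s _ ih => exact ((h a).or ih).congr fun v => by simp
  simpa using key Finset.univ

theorem dfn_forall {ι : Type} [Finite ι] {P : ι → (Fin n → ℝ) → Prop}
    (h : ∀ i, Dfn (P i)) : Dfn fun v => ∀ i, P i v := by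
  classical
  have := Fintype.ofFinite ι
  have key : ∀ s : Finset ι, Dfn fun v => ∀ i ∈ s, P i v := by
    intro s
    induction s using Finset.induction_on with
    | empty => simpa using dfn_const (n := n) True
    | insert a s _ ih => exact ((h a).and ih).congr fun v => by simp
  simpa using key Finset.univ

/-- The term `k • t`. -/
def mulT (t : ELA.Term n) : ℕ → ELA.Term n
  | 0 => .zero
  | k + 1 => .add (mulT t k) t

/-- The numeral `k` as a term. -/
def numT (k : ℕ) : ELA.Term n := mulT .one k

@[simp] theorem eval_mulT (t : ELA.Term n) (k : ℕ) (v : Fin n → ℝ) :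
    (mulT t k).eval v = k * t.eval v := by
  induction k with
  | zero => simp [mulT, ELA.Term.eval]
  | succ k ih => simp [mulT, ELA.Term.eval, ih]; ring

@[simp] theorem eval_numT (k : ℕ) (v : Fin n → ℝ) : (numT k : ELA.Term n).eval v = k := by
  simp [numT, ELA.Term.eval]

end Dfn

/-- Weakening of a term by one fresh last variable. -/
def lift {n : ℕ} : ELA.Term n → ELA.Term (n + 1)
  | .var i => .var i.castSucc
  | .zero => .zero
  | .one => .one
  | .add s t => .add (lift s) (lift t)
  | .floor t => .floor (lift t)

@[simp] theorem eval_lift {n : ℕ} (t : ELA.Term n) (w : Fin (n + 1) → ℝ) :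
    (lift t).eval w = t.eval (fun i => w i.castSucc) := by
  induction t with
  | var i => rfl
  | zero => rfl
  | one => rfl
  | add s t hs ht => simp [lift, ELA.Term.eval, hs, ht]
  | floor t ht => simp [lift, ELA.Term.eval, ht]

/-- Ultimately periodic sets of natural numbers are definable. -/
theorem dfn_periodic {n : ℕ} (A : ℕ → Prop) (N p : ℕ) (hp : 0 < p)
    (hA : ∀ m, N ≤ m → (A (m + p) ↔ A m)) (t : ELA.Term n) :
    Dfn fun v => ∃ m : ℕ, A m ∧ t.eval v = m := by
  have hA' : ∀ r y, A (N + r + p * y) ↔ A (N + r) := by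
    intro r y
    induction y with
    | zero => simp
    | succ y ih =>
      rw [← ih, ← hA (N + r + p * y) (by omega)]
      rw [show N + r + p * (y + 1) = N + r + p * y + p by ring]
  have h1 : Dfn fun v : Fin n → ℝ => ∃ m : Fin N, A m ∧ t.eval v = ((m : ℕ) : ℝ) :=
    dfn_exists fun m => (dfn_const _).and
      ((dfn_eq t (numT m)).congr fun v => by simp)
  have h2 : Dfn fun v : Fin n → ℝ => ∃ r : Fin p, A (N + r) ∧
      ∃ y : ℝ, ((⌊y⌋ : ℝ) = y ∧ 0 ≤ y) ∧ t.eval v = ((N + r : ℕ) : ℝ) + p * y := by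
    refine dfn_exists fun r => (dfn_const _).and (Dfn.ex ?_)
    refine ((dfn_eq (.floor (.var (Fin.last n))) (.var (Fin.last n))).and
      (dfn_le .zero (.var (Fin.last n)))).and ?_ |>.congr fun v => Iff.rfl
    exact (dfn_eq (lift t) (.add (numT (N + r)) (mulT (.var (Fin.last n)) p))).congr
      fun v => by simp [ELA.Term.eval]
  refine (h1.or h2).congr fun v => ⟨?_, ?_⟩
  · rintro ⟨m, hm, e⟩
    by_cases hN : m < N
    · exact Or.inl ⟨⟨m, hN⟩, hm, e⟩
    · have hdiv : N + (m - N) % p + p * ((m - N) / p) = m := by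
        have := Nat.mod_add_div (m - N) p
        omega
      refine Or.inr ⟨⟨(m - N) % p, Nat.mod_lt _ hp⟩, ?_, (((m - N) / p : ℕ) : ℝ), ⟨?_, ?_⟩, ?_⟩
      · rw [← hA' _ ((m - N) / p)]
        simpa [hdiv] using hm
      · rw [Int.floor_natCast, Int.cast_natCast]
      · positivity
      · rw [e]
        exact_mod_cast hdiv.symm
  · rintro (⟨m, hm, e⟩ | ⟨r, hr, y, ⟨hy, hy0⟩, e⟩)
    · exact ⟨m, hm, e⟩
    · have hz : 0 ≤ ⌊y⌋ := Int.floor_nonneg.2 hy0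
      obtain ⟨k, hk⟩ := Int.eq_ofNat_of_zero_le hz
      have hyk : y = k := by rw [← hy, hk]; simp
      refine ⟨N + r + p * k, (hA' _ _).2 hr, ?_⟩
      rw [e, hyk]
      push_cast
      ring

/-! ### Clock regions -/

/-- Names of clock regions with respect to the maximal constant `M`. -/
abbrev Cls (M : ℕ) := Fin (M + 1) → Prop × Prop

/-- The region of a clock value, recorded through its comparisons with `0, …, M`. All values
above `M` form a single region. -/
def cls (M : ℕ) (x : ℝ) : Cls M := fun k => (x ≤ (k : ℕ), x < (k : ℕ))

theorem cls_eq_iff {M : ℕ} {x y : ℝ} : cls M x = cls M y ↔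
    ∀ k : ℕ, k ≤ M → (x ≤ k ↔ y ≤ k) ∧ (x < k ↔ y < k) := by
  constructor
  · intro h k hk
    have := congrFun h ⟨k, by omega⟩
    simpa [cls] using this
  · intro h
    funext k
    have := h k (by omega)
    simpa [cls] using this

theorem cls_gt {M : ℕ} {x y : ℝ} (hx : M < x) (hy : M < y) : cls M x = cls M y := by
  rw [cls_eq_iff]
  intro k hk
  have hk' : (k : ℝ) ≤ M := by exact_mod_cast hk
  constructor <;> constructor <;> intro h <;> linarith

theorem cls_eq_nat {M : ℕ} {x : ℝ} {k : ℕ} (hk : k ≤ M) (h : cls M x = cls M k) : x = k := by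
  have := cls_eq_iff.1 h k hk
  simp at this
  linarith

theorem cls_nonneg {M : ℕ} {x y : ℝ} (h : cls M x = cls M y) (hx : 0 ≤ x) : 0 ≤ y := by
  have := (cls_eq_iff.1 h 0 (by omega)).2
  by_contra hy
  push Not at hy
  have : x < 0 := by simpa using this.2 (by simpa using hy)
  linarith

/-- Regions are intervals, linearly ordered. -/
theorem cls_lt_of_lt {M : ℕ} {x y x' y' : ℝ} (hxy : x < y) (hne : cls M x ≠ cls M y)
    (hx : cls M x = cls M x') (hy : cls M y = cls M y') : x' < y' := by
  rw [Ne, cls_eq_iff] at hne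
  rw [cls_eq_iff] at hx hy
  push Not at hne
  obtain ⟨k, hk, h⟩ := hne
  obtain ⟨hx1, hx2⟩ := hx k hk
  obtain ⟨hy1, hy2⟩ := hy k hk
  by_cases a : x ≤ k
  · by_cases b : y ≤ k
    · have c : x < k := lt_of_lt_of_le hxy b
      have d : ¬ y < k := by
        intro d
        rcases h ⟨fun _ => b, fun _ => a⟩ with ⟨_, h⟩ | ⟨h, _⟩ <;> linarith
      have := hx2.1 c
      have := not_lt.1 (fun e => d (hy2.2 e))
      linarith
    · have := hx1.1 a
      have := not_le.1 (fun e => b (hy1.2 e))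
      linarith
  · exfalso
    have a' := not_le.1 a
    have b' : (k : ℝ) < y := a'.trans hxy
    rcases h ⟨fun h => absurd h a, fun h => absurd h (not_le.2 b')⟩ with ⟨h, _⟩ | ⟨_, h⟩ <;>
      linarith

theorem dfn_cls {n M : ℕ} (t : ELA.Term n) (c : Cls M) : Dfn fun v => cls M (t.eval v) = c := by
  have : Dfn fun v : Fin n → ℝ => ∀ k : Fin (M + 1),
      (t.eval v ≤ (k : ℕ) ↔ (c k).1) ∧ (t.eval v < (k : ℕ) ↔ (c k).2) := by
    refine dfn_forall fun k => Dfn.and (Dfn.iff_const ?_ ?_ _) (Dfn.iff_const ?_ ?_ _)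
    · exact (dfn_le t (numT k)).congr fun v => by simp
    · exact (dfn_lt (numT k) t).congr fun v => by simp
    · exact (dfn_lt t (numT k)).congr fun v => by simp
    · exact (dfn_le (numT k) t).congr fun v => by simp
  refine this.congr fun v => ?_
  simp [funext_iff, Prod.ext_iff, cls]

/-- A relation contained in `≤` that only depends on the regions of its two arguments is
definable: it is a finite union of products of regions, intersected with `≤`. -/
theorem dfn_of_inv {n M : ℕ} {P : ℝ → ℝ → Prop} (hle : ∀ u v, P u v → u ≤ v)
    (inv : ∀ u v u' v', P u v → cls M u = cls M u' → cls M v = cls M v' → u' ≤ v' → P u' v')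
    (s t : ELA.Term n) : Dfn fun w => P (s.eval w) (t.eval w) := by
  have : Dfn fun w : Fin n → ℝ => ∃ c : Cls M × Cls M,
      (∃ u v, P u v ∧ cls M u = c.1 ∧ cls M v = c.2) ∧
      (cls M (s.eval w) = c.1 ∧ cls M (t.eval w) = c.2) ∧ s.eval w ≤ t.eval w :=
    dfn_exists fun c => (dfn_const _).and (((dfn_cls s _).and (dfn_cls t _)).and (dfn_le s t))
  refine this.congr fun w => ⟨fun h => ⟨(_, _), ⟨_, _, h, rfl, rfl⟩, ⟨rfl, rfl⟩, hle _ _ h⟩, ?_⟩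
  rintro ⟨⟨c, d⟩, ⟨u, v, h, h1, h2⟩, ⟨h3, h4⟩, h5⟩
  exact inv _ _ _ _ h (h1.trans h3.symm) (h2.trans h4.symm) h5

/-! ### One-clock automata and their runs -/

/-- A one-clock automaton up to presentation: `step p o q x` says that some rule from `p` to `q`
is enabled at clock value `x`; it keeps the clock if `o = none` and sets it to `k` if
`o = some k`. All constants are at most `M`, so enabledness depends on regions only. -/
structure Sys (X : Type) where
  M : ℕ
  step : X → Option ℕ → X → ℝ → Prop
  inv : ∀ {p o q x y}, cls M x = cls M y → step p o q x → step p o q y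
  bd : ∀ {p k q x}, step p (some k) q x → k ≤ M

variable {X : Type}

/-- `CRun S p u δ q v`: a run of duration `δ` from location `p` with clock value `u` to
location `q` with clock value `v`. -/
inductive CRun (S : Sys X) (p : X) (u : ℝ) : ℝ → X → ℝ → Prop
  | refl : CRun S p u 0 p u
  | elapse {δ q v} (t : ℝ) : CRun S p u δ q v → 0 ≤ t → CRun S p u (δ + t) q (v + t)
  | keep {δ q v q'} : CRun S p u δ q v → S.step q none q' v → CRun S p u δ q' v
  | reset {δ q v q'} {k : ℕ} : CRun S p u δ q v → S.step q (some k) q' v → CRun S p u δ q' k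

/-- Runs that never assign a constant to the clock; their duration is `v - u`. -/
inductive NR (S : Sys X) (p : X) (u : ℝ) : X → ℝ → Prop
  | refl : NR S p u p u
  | elapse {q v v'} : NR S p u q v → v ≤ v' → NR S p u q v'
  | keep {q v q'} : NR S p u q v → S.step q none q' v → NR S p u q' v

/-- A run from `(p, u)` which assigns a constant to the clock exactly once, by its last step,
taken at clock value `u₁`. -/
def Fst (S : Sys X) (p : X) (a : X × ℕ) (u u₁ : ℝ) : Prop :=
  ∃ p', NR S p u p' u₁ ∧ S.step p' (some a.2) a.1 u₁

variable {S : Sys X} {p q r : X} {u v w δ ε : ℝ}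

theorem NR.le (h : NR S p u q v) : u ≤ v := by
  induction h with
  | refl => exact le_rfl
  | elapse _ h ih => exact ih.trans h
  | keep _ _ ih => exact ih

theorem NR.inv (h : NR S p u q v) : ∀ {u' v'}, cls S.M u = cls S.M u' → cls S.M v = cls S.M v' →
    u' ≤ v' → NR S p u' q v' := by
  induction h with
  | refl => exact fun _ _ h => .elapse .refl h
  | @elapse q v₀ v h hv ih =>
    intro _ _ hu hw hle
    -- An intermediate value in the region of `v₀` has to be placed between the new end values.
    by_cases h1 : cls S.M v₀ = cls S.M v
    · exact ih hu (h1.trans hw) hle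
    by_cases h2 : cls S.M u = cls S.M v₀
    · exact (ih hu (h2.symm.trans hu) le_rfl).elapse hle
    · have a : u < v₀ := lt_of_le_of_ne h.le (fun e => h2 (e ▸ rfl))
      have b : v₀ < v := lt_of_le_of_ne hv (fun e => h1 (e ▸ rfl))
      exact (ih hu rfl (cls_lt_of_lt a h2 hu rfl).le).elapse (cls_lt_of_lt b h1 rfl hw).le
  | keep h hs ih =>
    intro u' v' hu hv' hle
    exact (ih hu hv' hle).keep (S.inv hv' hs)

theorem NR.crun (h : NR S p u q v) : CRun S p u (v - u) q v := by
  induction h with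
  | refl => simpa using CRun.refl
  | @elapse q v v' _ h ih =>
    have := ih.elapse (v' - v) (by linarith)
    convert this using 1 <;> ring
  | keep _ hs ih => exact ih.keep hs

theorem CRun.trans (h : CRun S p u δ q v) (h' : CRun S q v ε r w) :
    CRun S p u (δ + ε) r w := by
  induction h' with
  | refl => simpa using h
  | elapse t _ ht ih => simpa [add_assoc] using ih.elapse t ht
  | keep _ hs ih => exact ih.keep hs
  | reset _ hs ih => exact ih.reset hs

theorem CRun.dur_nonneg (h : CRun S p u δ q v) : 0 ≤ δ := by
  induction h with
  | refl => exact le_rfl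
  | elapse t _ ht ih => linarith
  | keep _ _ ih => exact ih
  | reset _ _ ih => exact ih

theorem CRun.val_nonneg (h : CRun S p u δ q v) (hu : 0 ≤ u) : 0 ≤ v := by
  induction h with
  | refl => exact hu
  | elapse t _ ht ih => linarith
  | keep _ _ ih => exact ih
  | reset _ _ ih => positivity

theorem CRun.split (h : CRun S p u δ q v) : ∀ {a : ℝ}, 0 ≤ a → a ≤ δ →
    ∃ q' v', CRun S p u a q' v' ∧ CRun S q' v' (δ - a) q v := by
  induction h with
  | refl =>
    intro a h0 h1
    obtain rfl : a = 0 := le_antisymm h1 h0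
    exact ⟨_, _, .refl, by simpa using CRun.refl⟩
  | @elapse δ q v t h ht ih =>
    intro a h0 h1
    by_cases ha : a ≤ δ
    · obtain ⟨q', v', h2, h3⟩ := ih h0 ha
      refine ⟨q', v', h2, ?_⟩
      have := h3.elapse t ht
      rwa [sub_add_eq_add_sub] at this
    · refine ⟨q, v + (a - δ), ?_, ?_⟩
      · have := h.elapse (a - δ) (by linarith)
        simpa using this
      · have := (CRun.refl (S := S) (p := q) (u := v + (a - δ))).elapse (δ + t - a) (by linarith)
        convert this using 1 <;> ring
  | keep _ hs ih =>
    intro a h0 h1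
    obtain ⟨q', v', h2, h3⟩ := ih h0 h1
    exact ⟨q', v', h2, h3.keep hs⟩
  | reset _ hs ih =>
    intro a h0 h1
    obtain ⟨q', v', h2, h3⟩ := ih h0 h1
    exact ⟨q', v', h2, h3.reset hs⟩

/-- Factorization of a run at its first and its last assignment of a constant. -/
theorem CRun.iff_decomp : CRun S p u δ q v ↔ (NR S p u q v ∧ v = δ + u) ∨
    ∃ ab : (X × Fin (S.M + 1)) × (X × Fin (S.M + 1)), ∃ u₁ d : ℝ,
      Fst S p (ab.1.1, ab.1.2) u u₁ ∧ CRun S ab.1.1 (ab.1.2 : ℕ) d ab.2.1 (ab.2.2 : ℕ) ∧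
      NR S ab.2.1 (ab.2.2 : ℕ) q v ∧ δ + u + (ab.2.2 : ℕ) = u₁ + d + v := by
  constructor
  · intro h
    induction h with
    | refl => exact Or.inl ⟨.refl, by simp⟩
    | elapse t _ ht ih =>
      rcases ih with ⟨h, e⟩ | ⟨ab, u₁, d, h1, h2, h3, e⟩
      · exact Or.inl ⟨h.elapse (by linarith), by linarith⟩
      · exact Or.inr ⟨ab, u₁, d, h1, h2, h3.elapse (by linarith), by linarith⟩
    | keep _ hs ih =>
      rcases ih with ⟨h, e⟩ | ⟨ab, u₁, d, h1, h2, h3, e⟩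
      · exact Or.inl ⟨h.keep hs, e⟩
      · exact Or.inr ⟨ab, u₁, d, h1, h2, h3.keep hs, e⟩
    | @reset δ q v q' k _ hs ih =>
      have hk : k < S.M + 1 := Nat.lt_succ_of_le (S.bd hs)
      rcases ih with ⟨h, e⟩ | ⟨⟨a, b⟩, u₁, d, h1, h2, h3, e⟩
      · exact Or.inr ⟨((q', ⟨k, hk⟩), (q', ⟨k, hk⟩)), v, 0, ⟨q, h, hs⟩, .refl, .refl,
          by simp only; linarith⟩
      · refine Or.inr ⟨(a, (q', ⟨k, hk⟩)), u₁, d + (v - (b.2 : ℕ)), h1,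
          (h2.trans h3.crun).reset hs, .refl, ?_⟩
        simp only at e ⊢
        linarith
  · rintro (⟨h, e⟩ | ⟨⟨a, b⟩, u₁, d, ⟨p', h0, hs⟩, h2, h3, e⟩)
    · have := h.crun
      rwa [e, add_sub_cancel_right, ← e] at this
    · have := ((h0.crun.reset hs).trans h2).trans h3.crun
      convert this using 1
      simp only at e ⊢
      linarith

/-! ### Time warps -/

/-- A strictly increasing reparametrization of time that fixes `0` and commutes with integer
translations. It preserves the region of every difference of two instants. -/
structure Warp (g : ℝ → ℝ) : Prop where
  zero : g 0 = 0
  mono : StrictMono g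
  add : ∀ (x : ℝ) (k : ℕ), g (x + k) = g x + k

theorem Warp.cls {g : ℝ → ℝ} (hg : Warp g) (M : ℕ) (x y : ℝ) :
    cls M (x - y) = cls M (g x - g y) := by
  rw [cls_eq_iff]
  intro k _
  rw [sub_le_iff_le_add', sub_le_iff_le_add', sub_lt_iff_lt_add', sub_lt_iff_lt_add', ← hg.add,
    hg.mono.le_iff_le, hg.mono.lt_iff_lt]
  exact ⟨Iff.rfl, Iff.rfl⟩

theorem Warp.nat {g : ℝ → ℝ} (hg : Warp g) (k : ℕ) : g k = k := by
  simpa [hg.zero] using hg.add 0 k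

/-- Warps act transitively on the instants strictly between `0` and `1`. The witness is
a power function on `[0, 1)`. -/
theorem exists_warp {f f' : ℝ} (h0 : 0 < f) (h1 : f < 1) (h0' : 0 < f') (h1' : f' < 1) :
    ∃ g, Warp g ∧ g f = f' := by
  set c := Real.logb f f'
  have hc : 0 < c := Real.logb_pos_of_base_lt_one h0 h1 h0' h1'
  refine ⟨fun x => ⌊x⌋ + Int.fract x ^ c, ⟨?_, ?_, ?_⟩, ?_⟩
  · simp [Real.zero_rpow hc.ne']
  · intro x y hxy
    have hx0 := Int.fract_nonneg x
    have hy0 := Int.fract_nonneg y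
    have hx1 := Int.fract_lt_one x
    rcases (Int.floor_mono hxy.le).eq_or_lt with e | e
    · have : Int.fract x < Int.fract y := by
        unfold Int.fract
        rw [e]
        linarith
      have := Real.rpow_lt_rpow hx0 this hc
      simp only [e]
      linarith
    · have e' : (⌊x⌋ : ℝ) + 1 ≤ ⌊y⌋ := by exact_mod_cast e
      have := Real.rpow_lt_one hx0 hx1 hc
      have := Real.rpow_nonneg hy0 c
      simp only
      linarith
  · intro x k
    simp only [Int.floor_add_natCast, Int.fract_add_natCast]
    push_cast
    ring
  · have e1 : ⌊f⌋ = 0 := Int.floor_eq_zero_iff.2 ⟨h0.le, h1⟩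
    have e2 : Int.fract f = f := Int.fract_eq_self.2 ⟨h0.le, h1⟩
    simp only [e1, e2]
    simpa using Real.rpow_logb h0 h1.ne h0'

/-- Two clock values of the same region, at instant `0`, are related by a warp of the instants
at which the clock was (virtually) zero, unless both exceed `M`. -/
theorem exists_warp_cls {M : ℕ} {u w : ℝ} (hu : 0 ≤ u) (h : cls M u = cls M w) :
    ∃ g, Warp g ∧ (w = - g (-u) ∨ (M < u ∧ M < w)) := by
  have hid : Warp (fun x => x) := ⟨rfl, strictMono_id, fun _ _ => rfl⟩
  by_cases hM : (M : ℝ) < u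
  · refine ⟨_, hid, Or.inr ⟨hM, ?_⟩⟩
    by_contra hw
    exact absurd (((cls_eq_iff.1 h M le_rfl).1).2 (not_lt.1 hw)) (not_le.2 hM)
  push Not at hM
  have hf1 := Nat.floor_le hu
  have hf2 := Nat.lt_floor_add_one u
  set n := ⌊u⌋₊
  rcases hf1.eq_or_lt with e | e
  · refine ⟨_, hid, Or.inl ?_⟩
    have hn : n ≤ M := by exact_mod_cast hf1.trans hM
    rw [← e] at h ⊢
    simpa using cls_eq_nat hn h.symm
  · have hn : n + 1 ≤ M := by
      have : n < M := by exact_mod_cast e.trans_le hM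
      omega
    have a := cls_eq_iff.1 h n (by omega)
    have b := cls_eq_iff.1 h (n + 1) hn
    have a' : (n : ℝ) < w := not_le.1 fun c => absurd (a.1.2 c) (not_le.2 e)
    have b' : w < n + 1 := by
      have := b.2.1 (by push_cast; exact hf2)
      push_cast at this
      exact this
    obtain ⟨g, hg, e'⟩ := exists_warp (f := n + 1 - u) (f' := n + 1 - w)
      (by linarith) (by linarith) (by linarith) (by linarith)
    refine ⟨g, hg, Or.inl ?_⟩
    have := hg.add (-u) (n + 1)
    rw [show -u + ((n + 1 : ℕ) : ℝ) = n + 1 - u by push_cast; ring, e'] at this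
    push_cast at this
    linarith

/-- Runs can be warped. A configuration with clock value `x` at instant `t` is described by `t`
and the instant `t - x` at which the clock was virtually zero; both are mapped by `g`. Clock
values above `M` need not be matched. -/
theorem CRun.warp {g : ℝ → ℝ} (hg : Warp g) (h : CRun S p u δ q v)
    (hw : w = - g (-u) ∨ ((S.M : ℝ) < u ∧ (S.M : ℝ) < w)) :
    ∃ v₂, (v₂ = g δ - g (δ - v) ∨ ((S.M : ℝ) < v ∧ (S.M : ℝ) < v₂)) ∧
      CRun S p w (g δ) q v₂ := by
  have hcls : ∀ {δ v v₂ : ℝ}, (v₂ = g δ - g (δ - v) ∨ ((S.M : ℝ) < v ∧ (S.M : ℝ) < v₂)) →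
      OneClock.cls S.M v = OneClock.cls S.M v₂ := by
    rintro δ v v₂ (e | ⟨h1, h2⟩)
    · rw [e, ← hg.cls, sub_sub_cancel]
    · exact cls_gt h1 h2
  induction h with
  | refl =>
    refine ⟨w, ?_, ?_⟩
    · simpa [hg.zero] using hw
    · rw [hg.zero]
      exact .refl
  | @elapse δ q v t _ ht ih =>
    obtain ⟨v₂, h1, h2⟩ := ih
    have hm : g δ ≤ g (δ + t) := hg.mono.monotone (by linarith)
    refine ⟨v₂ + (g (δ + t) - g δ), ?_, ?_⟩
    · rcases h1 with e | ⟨h3, h4⟩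
      · left
        rw [e, add_sub_add_right_eq_sub]
        ring
      · right
        constructor <;> linarith
    · have := h2.elapse (g (δ + t) - g δ) (by linarith)
      simpa using this
  | keep _ hs ih =>
    obtain ⟨v₂, h1, h2⟩ := ih
    exact ⟨v₂, h1, h2.keep (S.inv (hcls h1) hs)⟩
  | @reset δ q v q' k _ hs ih =>
    obtain ⟨v₂, h1, h2⟩ := ih
    refine ⟨k, Or.inl ?_, h2.reset (S.inv (hcls h1) hs)⟩
    have := hg.add (δ - k) k
    rw [sub_add_cancel] at this
    linarith

/-- Variant of `CRun.warp` in terms of regions. -/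
theorem CRun.warp_cls {g : ℝ → ℝ} (hg : Warp g) (h : CRun S p u δ q v)
    (hw : w = - g (-u) ∨ ((S.M : ℝ) < u ∧ (S.M : ℝ) < w)) :
    ∃ v₂, cls S.M v₂ = cls S.M v ∧ CRun S p w (g δ) q v₂ := by
  obtain ⟨v₂, h1, h2⟩ := h.warp hg hw
  refine ⟨v₂, ?_, h2⟩
  rcases h1 with e | ⟨h3, h4⟩
  · rw [e, ← hg.cls, sub_sub_cancel]
  · exact cls_gt h4 h3

/-! ### Durations between integral configurations -/

/-- The locations and regions reachable from `(a, k)` in time exactly `n`. -/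
def ReachSet (S : Sys X) (a : X) (k n : ℕ) : Set (X × Cls S.M) :=
  {c | ∃ v, cls S.M v = c.2 ∧ CRun S a k n c.1 v}

/-- The locations and regions reachable from `R` in time exactly `1`. -/
def tick (S : Sys X) (R : Set (X × Cls S.M)) : Set (X × Cls S.M) :=
  {c | ∃ q' v', 0 ≤ v' ∧ (q', cls S.M v') ∈ R ∧ ∃ v, cls S.M v = c.2 ∧ CRun S q' v' 1 c.1 v}

theorem reachSet_succ (a : X) (k n : ℕ) : ReachSet S a k (n + 1) = tick S (ReachSet S a k n) := by
  ext ⟨q, c⟩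
  constructor
  · rintro ⟨v, hv, h⟩
    obtain ⟨q', v', h1, h2⟩ := h.split (a := n) (by positivity) (by push_cast; linarith)
    refine ⟨q', v', h1.val_nonneg (by positivity), ⟨v', rfl, h1⟩, v, hv, ?_⟩
    simpa using h2
  · rintro ⟨q', v', h0, ⟨w, hw, h1⟩, v, hv, h2⟩
    obtain ⟨g, hg, e⟩ := exists_warp_cls h0 (Eq.symm hw)
    obtain ⟨v₂, h3, h4⟩ := h2.warp_cls hg e
    have e1 : g 1 = 1 := by simpa using hg.nat 1
    rw [e1] at h4
    refine ⟨v₂, h3.trans hv, ?_⟩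
    simpa using h1.trans h4

/-- `ReachSet` iterates a self-map of a finite set, hence is ultimately periodic. -/
theorem reachSet_periodic [Finite X] (S : Sys X) (a : X) (k : ℕ) :
    ∃ N p, 0 < p ∧ ∀ m, N ≤ m → ReachSet S a k (m + p) = ReachSet S a k m := by
  obtain ⟨i, j, hij, e⟩ := Finite.exists_ne_map_eq_of_infinite (ReachSet S a k)
  wlog h : i < j generalizing i j
  · exact this j i hij.symm e.symm (by omega)
  refine ⟨i, j - i, by omega, fun m hm => ?_⟩
  induction m, hm using Nat.le_induction with
  | base => rw [show i + (j - i) = j by omega, e]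
  | succ m hm ih => rw [show m + 1 + (j - i) = m + (j - i) + 1 by omega, reachSet_succ, ih,
      ← reachSet_succ]

theorem crun_nat_iff {a b : X} {k l n : ℕ} (hl : l ≤ S.M) :
    CRun S a k n b l ↔ (b, cls S.M l) ∈ ReachSet S a k n := by
  constructor
  · exact fun h => ⟨_, rfl, h⟩
  · rintro ⟨v, hv, h⟩
    rwa [cls_eq_nat hl hv] at h

/-- The location `b` with clock value `l` can be reached from `R` in some time in `(0, 1)`. -/
def HalfTick (S : Sys X) (b : X) (l : ℕ) (R : Set (X × Cls S.M)) : Prop :=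
  ∃ q' v' t, 0 ≤ v' ∧ (q', cls S.M v') ∈ R ∧ (0 < t ∧ t < 1) ∧ CRun S q' v' t b l

/-- Between integral configurations, a non-integral duration matters only through its integral
part. -/
theorem crun_half_iff {a b : X} {k l n : ℕ} (hl : l ≤ S.M) {d : ℝ} (h1 : n < d) (h2 : d < n + 1) :
    CRun S a k d b l ↔ HalfTick S b l (ReachSet S a k n) := by
  constructor
  · intro h
    obtain ⟨q', v', h3, h4⟩ := h.split (a := n) (by positivity) h1.le
    exact ⟨q', v', d - n, h3.val_nonneg (by positivity), ⟨v', rfl, h3⟩,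
      ⟨by linarith, by linarith⟩, h4⟩
  · rintro ⟨q', v', t, h0, ⟨w, hw, h3⟩, ⟨ht0, ht1⟩, h4⟩
    obtain ⟨g, hg, e⟩ := exists_warp_cls h0 (Eq.symm hw)
    obtain ⟨v₂, h5, h6⟩ := h4.warp_cls hg e
    rw [cls_eq_nat hl h5] at h6
    have g0 : 0 < g t := hg.zero ▸ hg.mono ht0
    have g1 : g t < 1 := by
      have e1 : g 1 = 1 := by simpa using hg.nat 1
      exact e1 ▸ hg.mono ht1
    have h7 := h3.trans h6
    -- The duration found so far is `n + g t`; a second warp moves it to `d`.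
    obtain ⟨g', hg', e'⟩ := exists_warp (f := g t) (f' := d - n) g0 g1 (by linarith) (by linarith)
    have hk : (k : ℝ) = - g' (-k) := by
      have := hg'.add (-k) k
      rw [neg_add_cancel, hg'.zero] at this
      linarith
    obtain ⟨v₃, h8, h9⟩ := h7.warp_cls hg' (Or.inl hk)
    rw [cls_eq_nat hl h8, add_comm, hg'.add, e', sub_add_cancel] at h9
    exact h9

theorem dfn_crun [Finite X] {n : ℕ} {a b : X} {k l : ℕ} (hl : l ≤ S.M) (t : ELA.Term n) :
    Dfn fun v => CRun S a k (t.eval v) b l := by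
  obtain ⟨N, p, hp, hper⟩ := reachSet_periodic S a k
  have hA := dfn_periodic (fun m => (b, cls S.M l) ∈ ReachSet S a k m) N p hp
    (fun m hm => by simp only [hper m hm]) t
  have hB := (dfn_periodic (fun m => HalfTick S b l (ReachSet S a k m)) N p hp
    (fun m hm => by simp only [hper m hm]) (.floor t)).and (dfn_lt (.floor t) t)
  refine (hA.or hB).congr fun v => ⟨fun h => ?_, ?_⟩
  · have h0 := h.dur_nonneg
    obtain ⟨m, hm⟩ := Int.eq_ofNat_of_zero_le (Int.floor_nonneg.2 h0)
    have hf : (⌊t.eval v⌋ : ℝ) = m := by rw [hm]; simp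
    rcases (Int.floor_le (t.eval v)).eq_or_lt with e | e
    · left
      have e' : t.eval v = m := by rw [← e, hf]
      rw [e', crun_nat_iff hl] at h
      exact ⟨m, h, e'⟩
    · right
      refine ⟨⟨m, ?_, hf⟩, e⟩
      rw [← crun_half_iff hl (hf ▸ e) (hf ▸ Int.lt_floor_add_one _)]
      exact h
  · rintro (⟨m, h, e⟩ | ⟨⟨m, h, hf⟩, e⟩)
    · rw [e]
      exact (crun_nat_iff hl).2 h
    · change (⌊t.eval v⌋ : ℝ) = m at hf
      change (⌊t.eval v⌋ : ℝ) < t.eval v at e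
      exact (crun_half_iff hl (hf ▸ e) (hf ▸ Int.lt_floor_add_one _)).2 h

/-- The reachability relation of a one-clock automaton is definable. -/
theorem dfn_reach [Finite X] (S : Sys X) (p q : X) :
    Dfn fun w : Fin 3 → ℝ => CRun S p (w 0) (w 1) q (w 2) := by
  have hNR : ∀ {n} (p q : X) (s t : ELA.Term n), Dfn fun v => NR S p (s.eval v) q (t.eval v) :=
    fun p q s t => dfn_of_inv (P := fun x y => NR S p x q y) (fun _ _ h => h.le)
      (fun _ _ _ _ h hu hv hle => h.inv hu hv hle) s t
  have hF : ∀ {n} (p : X) a (s t : ELA.Term n), Dfn fun v => Fst S p a (s.eval v) (t.eval v) :=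
    fun p a s t => dfn_of_inv (fun _ _ ⟨_, h, _⟩ => h.le)
      (fun _ _ _ _ ⟨p', h, hs⟩ hu hv hle => ⟨p', h.inv hu hv hle, S.inv hv hs⟩) s t
  refine Dfn.congr (Dfn.or ?_ ?_) fun w => CRun.iff_decomp
  · exact (hNR p q (.var 0) (.var 2)).and (dfn_eq (.var 2) (.add (.var 1) (.var 0)))
  · refine dfn_exists fun ab => Dfn.ex (Dfn.ex ?_)
    -- The variables are `u, δ, v, u₁, d`, in this order.
    refine Dfn.and (hF p _ (.var 0) (.var 3)) (Dfn.and ?_ (Dfn.and ?_ ?_))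
    · exact dfn_crun (Nat.le_of_lt_succ ab.2.2.2) (.var 4)
    · exact (hNR ab.2.1 q (numT ab.2.2) (.var 2)).congr fun v => by simp [ELA.Term.eval]
    · exact (dfn_eq (.add (.add (.var 1) (.var 0)) (numT ab.2.2))
        (.add (.add (.var 3) (.var 4)) (.var 2))).congr fun v => by simp [ELA.Term.eval]

/-! ### From timed automata to the abstract one-clock automata -/

open TBPPcore

/-- The net effect of a sequence of assignments to a single clock: the last constant assigned,
if any. -/
def upd : List (Assign Unit) → Option ℕ
  | [] => none
  | a :: U => (upd U).or (a.rhs.elim (fun _ => none) some)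

theorem applyUpdates_cval (U : List (Assign Unit)) (v : ℝ≥0) :
    applyUpdates (cval v) U = cval ((upd U).elim v fun k => (k : ℝ≥0)) := by
  induction U generalizing v with
  | nil => rfl
  | cons a U ih =>
    have h : applyAssign (cval v) a =
        cval ((a.rhs.elim (fun _ => none) some : Option ℕ).elim v fun k => (k : ℝ≥0)) := by
      funext x
      rcases a with ⟨l, e | e⟩ <;> simp [applyAssign] <;> rfl
    change applyUpdates (applyAssign (cval v) a) U = _
    rw [h, ih]
    cases hU : upd U <;> simp [upd, hU]

theorem exists_bound (𝒜 : TBPP Unit X) : ∃ M : ℕ, ∀ r ∈ 𝒜.rules,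
    (∀ a ∈ r.guard, a.bound ≤ M) ∧ ∀ k, upd r.update = some k → k ≤ M := by
  obtain ⟨M, hM⟩ := (𝒜.finite.image
    fun r => (r.guard.map (·.bound)).sum + (upd r.update).getD 0).bddAbove
  refine ⟨M, fun r hr => ?_⟩
  have h := hM (Set.mem_image_of_mem _ hr)
  constructor
  · intro a ha
    have := List.single_le_sum (l := r.guard.map (·.bound)) (by simp) a.bound
      (List.mem_map_of_mem ha)
    omega
  · intro k hk
    simp only [hk, Option.getD_some] at h
    omega

/-- The rules of a timed automaton, as transitions of an abstract one-clock automaton. -/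
def tstep (𝒜 : TBPP Unit X) (p : X) (o : Option ℕ) (q : X) (x : ℝ) : Prop :=
  ∃ r ∈ 𝒜.rules, r.src = p ∧ r.rhs = {q} ∧ upd r.update = o ∧
    ∃ μ : ℝ≥0, (μ : ℝ) = x ∧ GuardSat (cval μ) r.guard

theorem exists_sys (𝒜 : TBPP Unit X) : ∃ S : Sys X, S.step = tstep 𝒜 := by
  obtain ⟨M, hM⟩ := exists_bound 𝒜
  refine ⟨⟨M, tstep 𝒜, ?_, ?_⟩, rfl⟩
  · rintro p o q x y hxy ⟨r, hr, h1, h2, h3, μ, rfl, hg⟩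
    obtain ⟨ν, rfl⟩ : ∃ ν : ℝ≥0, (ν : ℝ) = y := ⟨⟨y, cls_nonneg hxy μ.2⟩, rfl⟩
    refine ⟨r, hr, h1, h2, h3, ν, rfl, fun a ha => ?_⟩
    have hs := hg a ha
    obtain ⟨e1, e2⟩ := cls_eq_iff.1 hxy a.bound ((hM r hr).1 a ha)
    have e1' : μ ≤ (a.bound : ℝ≥0) ↔ ν ≤ a.bound := by
      rw [← NNReal.coe_le_coe, ← NNReal.coe_le_coe (r₁ := ν)]
      simpa using e1
    have e2' : μ < (a.bound : ℝ≥0) ↔ ν < a.bound := by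
      rw [← NNReal.coe_lt_coe, ← NNReal.coe_lt_coe (r₁ := ν)]
      simpa using e2
    cases hc : a.cmp <;> simp only [hc, Cmp.Sat, cval, ge_iff_le, gt_iff_lt] at hs ⊢
    · exact e2'.1 hs
    · exact e1'.1 hs
    · exact le_antisymm (e1'.1 hs.le) (not_lt.1 fun h => (e2'.2 h).ne hs)
    · exact not_lt.1 fun h => absurd (e2'.2 h) (not_lt.2 hs)
    · exact not_le.1 fun h => absurd (e1'.2 h) (not_le.2 hs)
  · rintro p k q x ⟨r, hr, -, -, h3, -⟩
    exact (hM r hr).2 k h3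

theorem shift_single (t v : ℝ≥0) (q : X) :
    shift t ({(q, cval v)} : Config Unit X) = {(q, cval (v + t))} := by
  simp [shift, cval]
  rfl

theorem run_of_crun {𝒜 : TBPP Unit X} (hS : S.step = tstep 𝒜) {u : ℝ≥0}
    (h : CRun S p u δ q v) : ∃ δ' v' : ℝ≥0, (δ' : ℝ) = δ ∧ (v' : ℝ) = v ∧
      Run 𝒜 {(p, cval u)} δ' {(q, cval v')} := by
  have hd : ∀ {δ v v' : ℝ≥0} {q q'} {o : Option ℕ}, Run 𝒜 {(p, cval u)} δ {(q, cval v)} →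
      S.step q o q' v → v' = o.elim v (fun k => (k : ℝ≥0)) →
      Run 𝒜 {(p, cval u)} δ {(q', cval v')} := by
    intro δ v v' q q' o h hs hv
    rw [hS] at hs
    obtain ⟨r, hr, rfl, h2, rfl, μ, hμ, hg⟩ := hs
    obtain rfl : μ = v := NNReal.coe_injective hμ
    have := h.tail (by simpa using Step.discrete (B := 𝒜) 0 r _ hr hg)
    rw [h2] at this
    simpa [applyUpdates_cval, ← hv] using this
  induction h with
  | refl => exact ⟨0, u, rfl, rfl, .refl _⟩
  | elapse t _ ht ih =>
    obtain ⟨δ, v, rfl, rfl, h⟩ := ih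
    lift t to ℝ≥0 using ht
    have := h.tail (.elapse _ t)
    rw [shift_single] at this
    exact ⟨δ + t, v + t, by simp, by simp, this⟩
  | keep _ hs ih =>
    obtain ⟨δ, v, rfl, rfl, h⟩ := ih
    exact ⟨δ, v, rfl, rfl, hd h hs rfl⟩
  | @reset _ _ _ _ k _ hs ih =>
    obtain ⟨δ, v, rfl, rfl, h⟩ := ih
    exact ⟨δ, k, rfl, by simp, hd h hs rfl⟩

theorem crun_of_run {𝒜 : TBPP Unit X} (hTA : IsTA 𝒜) (hS : S.step = tstep 𝒜) {u : ℝ≥0}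
    {α β : Config Unit X} {δ : ℝ≥0} (h : Run 𝒜 α δ β) (hα : α = {(p, cval u)}) :
    ∃ q, ∃ v : ℝ≥0, β = {(q, cval v)} ∧ CRun S p u δ q v := by
  induction h with
  | refl => exact ⟨p, u, hα, .refl⟩
  | @tail β γ t s _ hs ih =>
    obtain ⟨q, v, rfl, h⟩ := ih
    generalize hβ : ({(q, cval v)} : Config Unit X) = β at hs
    cases hs with
    | elapse =>
      subst hβ
      exact ⟨q, v + s, shift_single _ _ _, by simpa using h.elapse s s.2⟩
    | discrete β r μ hr hg =>
      have hc : Multiset.card β = 0 := by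
        have := congrArg Multiset.card hβ
        simpa using this
      obtain rfl := Multiset.card_eq_zero.1 hc
      rw [zero_add, Multiset.singleton_inj, Prod.mk.injEq] at hβ
      obtain ⟨rfl, rfl⟩ := hβ
      obtain ⟨q', hq'⟩ := Multiset.card_eq_one.1 (hTA r hr)
      refine ⟨q', _, by rw [hq', applyUpdates_cval]; simp; rfl, ?_⟩
      have hs : S.step r.src (upd r.update) q' v := by
        rw [hS]
        exact ⟨r, hr, rfl, hq', rfl, v, rfl, hg⟩
      rw [add_zero]
      cases ho : upd r.update with
      | none => exact h.keep (ho ▸ hs)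
      | some k => simpa using h.reset (ho ▸ hs)

end OneClock

open TBPPcore in
/-- for every one-clock timed automaton `𝒜` (finitely many
nonterminals) and control locations `p, q`, the ternary reachability relation
`{(u, δ, v) ∈ ℝ≥0³ : (p,u) →*(δ) (q,v)}` is definable in existential linear
arithmetic. -/
theorem one_clock_TA_reachability_relation_ELA_definable
    (X : Type) [Fintype X] (𝒜 : TBPP Unit X) (hTA : IsTA 𝒜) (p q : X) :
    ELA.Definable 3 {w : Fin 3 → ℝ |
      ∃ u δ v : ℝ≥0, w 0 = (u : ℝ) ∧ w 1 = (δ : ℝ) ∧ w 2 = (v : ℝ) ∧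
        Run 𝒜 {(p, cval u)} δ {(q, cval v)}} := by
  obtain ⟨S, hS⟩ := OneClock.exists_sys 𝒜
  obtain ⟨φ, hφ⟩ := (OneClock.dfn_reach S p q).and (OneClock.dfn_le .zero (.var 0))
  refine ⟨φ, Set.ext fun w => ?_⟩
  rw [Set.mem_ofPred_eq, Set.mem_ofPred_eq, hφ]
  constructor
  · rintro ⟨u, δ, v, h0, h1, h2, h⟩
    obtain ⟨q', v', e, h'⟩ := OneClock.crun_of_run hTA hS h rfl
    rw [Multiset.singleton_inj, Prod.mk.injEq] at e
    obtain ⟨rfl, e⟩ := e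
    obtain rfl : v = v' := congrFun e ()
    rw [h0, h1, h2]
    exact ⟨h', by simp [ELA.Term.eval, h0]⟩
  · rintro ⟨h, h0⟩
    obtain ⟨u, hu⟩ : ∃ u : ℝ≥0, (u : ℝ) = w 0 := ⟨⟨w 0, h0⟩, rfl⟩
    rw [← hu] at h
    obtain ⟨δ, v, e1, e2, h'⟩ := OneClock.run_of_crun hS h
    exact ⟨u, δ, v, hu.symm, e1.symm, e2.symm, h'⟩
end

section
/- Let ℬ be a one-clock TBPP and A one of its nonterminals, and define the vanishing predicate VAN_A ⊆ ℝ≥0 × ℝ≥0 by VAN_A(x,t) iff {(A,x)} →*(t) ∅. Then there exist k ∈ ℕ and real points 0 = a₀ < a₁ < ⋯ < a_k (set a_{k+1} = ∞) such that for each piece P of the partition {a₀}, (a₀,a₁), {a₁}, …, {a_k}, (a_k, a_{k+1}) of ℝ≥0, the restriction {(x,t) ∈ VAN_A : x ∈ P} is either empty, or equal to {(x,t) : x ∈ P and t ≥ c − b·x}, or equal to {(x,t) : x ∈ P and t > c − b·x}, for some constant c ∈ ℝ and slope b ∈ {0,1} depending on the piece. -/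
/-!
A run survives a change of time scale. Put every event of a run on an absolute time axis that
starts at `0`, and record a clock of value `u` at time `τ` by its birth date `τ - u`. Guards compare
a current date `τ` with a birth date plus an integer constant, and resets create birth dates
`τ - k`, where all constants are at most some `M`. Hence a strictly increasing `f : ℝ → ℝ` with
`f 0 = 0` and `f (τ - k) = f τ - k` for `τ ≥ 0`, `k ≤ M`, applied to all dates, maps runs to runs
(`run_warp`), so `Vanish ℬ A x t` implies `Vanish ℬ A (-f (-x)) (f t)` (`vanish_warp`).

Two families of such `f` are enough. The maps `y ↦ ⌊y⌋ + h (fract y)`, for `h` increasing with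
`h 0 = 0` and `h 1 = 1`, move the fractional parts of `x` and `t` freely as long as their order is
kept (`vanish_fract`); the maps which are the identity on `[-M, ∞)` and affine below `-M` show that
a clock value above `M` is irrelevant (`vanish_stretch`). So on each of the pieces `{i}`,
`(i, i+1)` for `i < M`, `{M}`, `(M, ∞)` the predicate is a union of cells of a chain of lines
`t = c - b x` and of the open strips between consecutive lines. It is also upward closed in `t`,
because the empty configuration may wait; the least cell it contains thus determines it
(`good_of_chain`).
-/

open scoped NNReal

namespace TBPPcore

/-- The vanishing predicate of a one-clock TBPP:
`Vanish ℬ A x t` iff `{(A,x)} →*(t) ∅`. -/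
def Vanish {X : Type} (ℬ : TBPP Unit X) (A : X) (x t : ℝ≥0) : Prop :=
  Run ℬ {(A, cval x)} t (0 : Config Unit X)

/-- On a piece `P ⊆ ℝ≥0` of the partition, the restriction of the vanishing
predicate is empty, or an upward-closed region above a line of slope `0` or
`-1` with non-strict, resp. strict, boundary. -/
def VanishGoodOn {X : Type} (ℬ : TBPP Unit X) (A : X) (P : Set ℝ) : Prop :=
  (∀ x t : ℝ≥0, (x : ℝ) ∈ P → ¬ Vanish ℬ A x t) ∨
  ∃ c b : ℝ, (b = 0 ∨ b = 1) ∧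
    ((∀ x t : ℝ≥0, (x : ℝ) ∈ P → (Vanish ℬ A x t ↔ c - b * (x : ℝ) ≤ (t : ℝ))) ∨
     (∀ x t : ℝ≥0, (x : ℝ) ∈ P → (Vanish ℬ A x t ↔ c - b * (x : ℝ) < (t : ℝ))))

end TBPPcore

namespace TBPPcore

/-! ### Change of time scale -/

/-- `M` bounds all constants occurring in the guards and the updates of `ℬ`. -/
def BoundedBy {C X : Type} (ℬ : TBPP C X) (M : ℕ) : Prop :=
  ∀ r ∈ ℬ.rules, (∀ a ∈ r.guard, a.bound ≤ M) ∧
    ∀ a ∈ r.update, ∀ k, a.rhs = Sum.inr k → k ≤ M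

theorem exists_boundedBy {C X : Type} (ℬ : TBPP C X) : ∃ M, BoundedBy ℬ M := by
  let b : Rule C X → ℕ := fun r =>
    (r.guard.map (fun a => a.bound)).sum +
      (r.update.map (fun a => Sum.elim (fun _ => 0) id a.rhs)).sum
  obtain ⟨M, hM⟩ := (ℬ.finite.image b).bddAbove
  refine ⟨M, fun r hr => ?_⟩
  have hb : b r ≤ M := hM ⟨r, hr, rfl⟩
  constructor
  · intro a ha
    have := List.le_sum_of_mem (List.mem_map_of_mem (f := fun a : GuardAtom C => a.bound) ha)
    simp only [b] at hb
    omega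
  · intro a ha k hk
    have := List.le_sum_of_mem
      (List.mem_map_of_mem (f := fun a : Assign C => Sum.elim (fun _ => 0) id a.rhs) ha)
    simp only [b] at hb
    simp only [hk, Sum.elim_inr, id] at this
    omega

/-- A change of time scale which is compatible with all integer constants up to `M`. -/
structure IsWarp (M : ℕ) (f : ℝ → ℝ) : Prop where
  mono : StrictMono f
  zero : f 0 = 0
  sub : ∀ τ : ℝ, 0 ≤ τ → ∀ k : ℕ, k ≤ M → f (τ - k) = f τ - k

/-- The valuation obtained from `μ`, read at time `τ`, when every date `y` is replaced by `f y`;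
the truncation is harmless for increasing `f`, see `coe_warpVal`. -/
noncomputable def warpVal {C : Type} (f : ℝ → ℝ) (τ : ℝ) (μ : Val C) : Val C :=
  fun c => (f τ - f (τ - μ c)).toNNReal

/-- Apply `warpVal` to every member of a configuration. -/
noncomputable def warp {C X : Type} (f : ℝ → ℝ) (τ : ℝ) (α : Config C X) : Config C X :=
  α.map (fun p => (p.1, warpVal f τ p.2))

section

variable {C X : Type} {M : ℕ} {f : ℝ → ℝ}

theorem coe_warpVal (hf : IsWarp M f) (τ : ℝ) (μ : Val C) (c : C) :
    (warpVal f τ μ c : ℝ) = f τ - f (τ - μ c) := by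
  unfold warpVal
  rw [Real.coe_toNNReal]
  have : f (τ - μ c) ≤ f τ := hf.mono.monotone (by have := (μ c).coe_nonneg; linarith)
  linarith

theorem guardSat_warpVal (hf : IsWarp M f) {τ : ℝ} (hτ : 0 ≤ τ) {μ : Val C}
    {g : List (GuardAtom C)} (hg : ∀ a ∈ g, a.bound ≤ M) (h : GuardSat μ g) :
    GuardSat (warpVal f τ μ) g := by
  intro a ha
  have h1 := h a ha
  have h2 := hf.sub τ hτ a.bound (hg a ha)
  have h3 := coe_warpVal hf τ μ a.clock
  have lt1 := hf.mono.lt_iff_lt (a := τ - a.bound) (b := τ - μ a.clock)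
  have lt2 := hf.mono.lt_iff_lt (a := τ - μ a.clock) (b := τ - a.bound)
  revert h1
  cases a.cmp <;> simp only [Cmp.Sat, ← NNReal.coe_lt_coe, ← NNReal.coe_le_coe, ← NNReal.coe_inj,
    ge_iff_le, gt_iff_lt, h3, NNReal.coe_natCast] <;> intro h1
  · linarith [lt1.2 (by linarith)]
  · by_contra h4
    linarith [lt2.1 (by linarith)]
  · rw [h1]; linarith
  · by_contra h4
    linarith [lt1.1 (by linarith)]
  · linarith [lt2.2 (by linarith)]

theorem warpVal_applyAssign [DecidableEq C] (hf : IsWarp M f) {τ : ℝ} (hτ : 0 ≤ τ) (μ : Val C)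
    (a : Assign C) (ha : ∀ k, a.rhs = Sum.inr k → k ≤ M) :
    warpVal f τ (applyAssign μ a) = applyAssign (warpVal f τ μ) a := by
  funext c
  rcases a with ⟨l, e⟩
  by_cases hc : c = l
  · subst hc
    rcases e with y | k
    · simp only [applyAssign, Function.update_self, warpVal]
      rfl
    · have e : (Nat.cast <$> (Sum.inr k : C ⊕ ℕ)) = Sum.inr (k : ℝ≥0) := rfl
      apply NNReal.coe_injective
      rw [coe_warpVal hf]
      simp [applyAssign, e, hf.sub τ hτ k (ha k rfl)]
  · simp [applyAssign, warpVal, hc]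

theorem warpVal_applyUpdates [DecidableEq C] (hf : IsWarp M f) {τ : ℝ} (hτ : 0 ≤ τ)
    (U : List (Assign C)) (hU : ∀ a ∈ U, ∀ k, a.rhs = Sum.inr k → k ≤ M) (μ : Val C) :
    warpVal f τ (applyUpdates μ U) = applyUpdates (warpVal f τ μ) U := by
  induction U generalizing μ with
  | nil => rfl
  | cons a U ih =>
    have h := ih (fun b hb => hU b (List.mem_cons_of_mem _ hb)) (applyAssign μ a)
    rw [warpVal_applyAssign hf hτ μ a (hU a List.mem_cons_self)] at h
    exact h

/-- A change of time scale maps runs that start at time `0` to runs. -/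
theorem run_warp [DecidableEq C] {ℬ : TBPP C X} (hℬ : BoundedBy ℬ M) (hf : IsWarp M f)
    {α β : Config C X} {t : ℝ≥0} (h : Run ℬ α t β) :
    Run ℬ (warp f 0 α) (f t).toNNReal (warp f t β) := by
  induction h with
  | refl =>
    simp only [NNReal.coe_zero, hf.zero, Real.toNNReal_zero]
    exact Run.refl _
  | @tail β γ t s _ hs ih =>
    cases hs with
    | elapse _ s =>
      have ht0 : 0 ≤ f t := by rw [← hf.zero]; exact hf.mono.monotone t.coe_nonneg
      have hts : f t ≤ f (t + s : ℝ≥0) :=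
        hf.mono.monotone (by push_cast; linarith [s.coe_nonneg])
      have e1 : (f (t + s : ℝ≥0)).toNNReal
          = (f t).toNNReal + (f (t + s : ℝ≥0) - f t).toNNReal := by
        rw [← Real.toNNReal_add ht0 (by linarith)]; congr 1; ring
      have e2 : warp f (t + s : ℝ≥0) (shift s β)
          = shift (f (t + s : ℝ≥0) - f t).toNNReal (warp f t β) := by
        simp only [warp, shift, Multiset.map_map]
        refine Multiset.map_congr rfl fun p _ => ?_
        simp only [Function.comp, Prod.mk.injEq, true_and]
        funext c
        apply NNReal.coe_injective
        rw [coe_warpVal hf]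
        push_cast
        rw [coe_warpVal hf, Real.coe_toNNReal _ (by push_cast at hts; linarith)]
        rw [show (t : ℝ) + s - (p.2 c + s) = t - p.2 c by ring]
        ring
      rw [e1, e2]
      exact Run.tail ih (Step.elapse _ _)
    | discrete δ r μ hr hg =>
      have hst := Step.discrete (warp f t δ) r (warpVal f t μ) hr
        (guardSat_warpVal hf t.coe_nonneg (hℬ r hr).1 hg)
      rw [← warpVal_applyUpdates hf t.coe_nonneg _ (hℬ r hr).2] at hst
      have h := Run.tail (γ := warp f t (δ + r.rhs.map (fun Y => (Y, applyUpdates μ r.update))))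
        ih (s := 0) (by simpa [warp, Multiset.map_map, Function.comp_def] using hst)
      simpa using h

end

variable {X : Type} {ℬ : TBPP Unit X} {A : X} {M : ℕ}

theorem vanish_warp {f : ℝ → ℝ} (hℬ : BoundedBy ℬ M) (hf : IsWarp M f) {x t x' t' : ℝ≥0}
    (hx : (x' : ℝ) = -f (-x)) (ht : (t' : ℝ) = f t) (h : Vanish ℬ A x t) :
    Vanish ℬ A x' t' := by
  have h1 := run_warp hℬ hf h
  rw [← ht, Real.toNNReal_coe] at h1
  have e : warpVal f 0 (cval x) = cval x' := by
    funext c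
    apply NNReal.coe_injective
    rw [coe_warpVal hf]
    simp [cval, hx, hf.zero]
  simpa [Vanish, warp, e] using h1

/-- The empty configuration may wait, so vanishing is upward closed in the duration. -/
theorem Vanish.mono {x t t' : ℝ≥0} (h : Vanish ℬ A x t) (ht : t ≤ t') : Vanish ℬ A x t' := by
  have := Run.tail h (Step.elapse 0 (t' - t))
  rw [add_tsub_cancel_of_le ht] at this
  exact this

/-! ### The two families of time scales -/

theorem isWarp_fract {h : ℝ → ℝ} (hh : StrictMono h) (h0 : h 0 = 0) (h1 : h 1 = 1) :
    IsWarp M (fun y => ⌊y⌋ + h (Int.fract y)) where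
  mono := by
    intro y z hyz
    have hy : h (Int.fract y) < 1 := h1 ▸ hh (Int.fract_lt_one y)
    have hz : 0 ≤ h (Int.fract z) := h0 ▸ hh.monotone (Int.fract_nonneg z)
    rcases (Int.floor_mono hyz.le).eq_or_lt with e | e
    · have : Int.fract y < Int.fract z := by simp only [Int.fract, e]; linarith
      simpa only [e, add_lt_add_iff_left] using hh this
    · have : (⌊y⌋ : ℝ) + 1 ≤ ⌊z⌋ := by exact_mod_cast e
      simp only
      linarith
  zero := by simp [h0]
  sub := by
    intro τ _ k _
    simp only [Int.floor_sub_natCast, Int.fract_sub_natCast]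
    push_cast
    ring

/-- The fractional parts of `-x` and of `t` may be moved by any increasing bijection of the
unit interval. -/
theorem vanish_fract (hℬ : BoundedBy ℬ M) {h : ℝ → ℝ} (hh : StrictMono h) (h0 : h 0 = 0)
    (h1 : h 1 = 1) {m j : ℕ} {p q : ℝ} (hp : 0 ≤ p) (hp1 : p < 1) (hq : 0 ≤ q) (hq1 : q < 1)
    {x t x' t' : ℝ≥0} (hx : (x : ℝ) = m - p) (ht : (t : ℝ) = j + q)
    (hx' : (x' : ℝ) = m - h p) (ht' : (t' : ℝ) = j + h q) (hv : Vanish ℬ A x t) :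
    Vanish ℬ A x' t' := by
  refine vanish_warp hℬ (isWarp_fract hh h0 h1) ?_ ?_ hv
  · have e1 : ⌊-(x : ℝ)⌋ = -(m : ℤ) := by
      rw [Int.floor_eq_iff, hx]; push_cast; constructor <;> linarith
    have e2 : Int.fract (-(x : ℝ)) = p := by
      rw [Int.fract, e1, hx]; push_cast; ring
    rw [e1, e2, hx']; push_cast; ring
  · have e1 : ⌊(t : ℝ)⌋ = (j : ℤ) := by
      rw [Int.floor_eq_iff, ht]; push_cast; constructor <;> linarith
    have e2 : Int.fract (t : ℝ) = q := by
      rw [Int.fract, e1, ht]; push_cast; ring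
    rw [e1, e2, ht']; push_cast; ring

/-- Above the largest constant the clock value does not matter. -/
theorem vanish_stretch (hℬ : BoundedBy ℬ M) {x x' t : ℝ≥0} (hx : (M : ℝ) < x)
    (hx' : (M : ℝ) < x') (h : Vanish ℬ A x t) : Vanish ℬ A x' t := by
  obtain ⟨r, hr, hr'⟩ : ∃ r : ℝ, 0 < r ∧ r * (x - M) = x' - M :=
    ⟨(x' - M) / (x - M), div_pos (by linarith) (by linarith),
      div_mul_cancel₀ _ (by linarith)⟩
  have hM : (0 : ℝ) ≤ M := Nat.cast_nonneg M
  refine vanish_warp (f := fun y => if -(M : ℝ) ≤ y then y else -M + r * (y + M)) hℬ ?_ ?_ ?_ h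
  · refine ⟨?_, ?_, ?_⟩
    · intro y z hyz
      simp only
      split_ifs with h1 h2 h2
      · exact hyz
      · linarith
      · nlinarith
      · nlinarith
    · simp
    · intro τ hτ k hk
      have hk' : (k : ℝ) ≤ M := by exact_mod_cast hk
      rw [if_pos (by linarith), if_pos (by linarith)]
  · rw [if_neg (by linarith)]; linarith
  · rw [if_pos (by linarith [t.coe_nonneg])]

/-- An increasing function which moves `u` to `v` and is the identity outside `(a, b)`: inside,
its graph consists of the segments joining `(a, a)`, `(u, v)` and `(b, b)`. -/
theorem exists_bump {a b u v : ℝ} (hau : a < u) (hub : u < b) (hav : a < v) (hvb : v < b) :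
    ∃ h : ℝ → ℝ, StrictMono h ∧ h u = v ∧ (∀ y, y ≤ a → h y = y) ∧ ∀ y, b ≤ y → h y = y := by
  obtain ⟨r, hr, hr'⟩ : ∃ r : ℝ, 0 < r ∧ r * (u - a) = v - a :=
    ⟨(v - a) / (u - a), div_pos (by linarith) (by linarith), div_mul_cancel₀ _ (by linarith)⟩
  obtain ⟨s, hs, hs'⟩ : ∃ s : ℝ, 0 < s ∧ s * (b - u) = b - v :=
    ⟨(b - v) / (b - u), div_pos (by linarith) (by linarith), div_mul_cancel₀ _ (by linarith)⟩
  refine ⟨fun y => if y ≤ a then y else if y ≤ u then a + r * (y - a) else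
    if y ≤ b then b - s * (b - y) else y, ?_, ?_, ?_, ?_⟩
  · intro y z hyz
    simp only
    split_ifs <;> nlinarith
  · simp only
    rw [if_neg (by linarith), if_pos le_rfl]; linarith
  · intro y hy
    simp only
    rw [if_pos hy]
  · intro y hy
    simp only
    rw [if_neg (by linarith), if_neg (by linarith)]
    split_ifs with h
    · rw [le_antisymm h hy]; ring
    · rfl

/-! ### Cells -/

/-- Let the lines `t = g n x` (`n = 0, 1, …`) increase from `0` to infinity over `P`. If vanishing
is constant on each of these lines and on each of the strips between two consecutive ones, then it
is the region above one of the lines, with or without the line. -/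
theorem good_of_chain {P : Set ℝ} (g : ℕ → ℝ → ℝ)
    (hline : ∀ n, ∃ c b : ℝ, (b = 0 ∨ b = 1) ∧ ∀ x, g n x = c - b * x)
    (h0 : ∀ x ∈ P, g 0 x = 0) (hmono : ∀ x ∈ P, ∀ n, g n x < g (n + 1) x)
    (hunb : ∀ x ∈ P, ∀ t, ∃ n, t < g (n + 1) x)
    (hpt : ∀ n, ∀ x t x' t' : ℝ≥0, (x : ℝ) ∈ P → (x' : ℝ) ∈ P → (t : ℝ) = g n x →
      (t' : ℝ) = g n x' → Vanish ℬ A x t → Vanish ℬ A x' t')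
    (hopen : ∀ n, ∀ x t x' t' : ℝ≥0, (x : ℝ) ∈ P → (x' : ℝ) ∈ P →
      g n x < t → (t : ℝ) < g (n + 1) x → g n x' < t' → (t' : ℝ) < g (n + 1) x' →
      Vanish ℬ A x t → Vanish ℬ A x' t') :
    VanishGoodOn ℬ A P := by
  classical
  have hg0 : ∀ x ∈ P, ∀ n, 0 ≤ g n x := by
    intro x hx n
    rw [← h0 x hx]
    exact monotone_nat_of_le_succ (f := fun n => g n x) (fun n => (hmono x hx n).le) n.zero_le
  by_cases hne : ∃ x t : ℝ≥0, (x : ℝ) ∈ P ∧ Vanish ℬ A x t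
  swap
  · left
    intro x t hx hv
    exact hne ⟨x, t, hx, hv⟩
  right
  have hex : ∃ n, ∃ x t : ℝ≥0, (x : ℝ) ∈ P ∧ Vanish ℬ A x t ∧ (t : ℝ) < g (n + 1) x := by
    obtain ⟨x, t, hx, hv⟩ := hne
    obtain ⟨n, hn⟩ := hunb x hx t
    exact ⟨n, x, t, hx, hv, hn⟩
  obtain ⟨n, ⟨x₀, t₀, hx₀, hv₀, ht₀⟩, hmin⟩ :=
    (⟨Nat.find hex, Nat.find_spec hex, fun m hm => Nat.find_min hex hm⟩ :
      ∃ n, (∃ x t : ℝ≥0, (x : ℝ) ∈ P ∧ Vanish ℬ A x t ∧ (t : ℝ) < g (n + 1) x) ∧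
        ∀ m < n, ¬ ∃ x t : ℝ≥0, (x : ℝ) ∈ P ∧ Vanish ℬ A x t ∧ (t : ℝ) < g (m + 1) x)
  have hlow : ∀ x t : ℝ≥0, (x : ℝ) ∈ P → Vanish ℬ A x t → g n x ≤ t := by
    intro x t hx hv
    rcases n with _ | n
    · rw [h0 x hx]; exact t.coe_nonneg
    · by_contra hlt
      exact hmin n n.lt_succ_self ⟨x, t, hx, hv, not_le.1 hlt⟩
  obtain ⟨c, b, hb, hc⟩ := hline n
  refine ⟨c, b, hb, ?_⟩
  simp only [← hc]
  by_cases hcl : ∃ x t : ℝ≥0, (x : ℝ) ∈ P ∧ (t : ℝ) = g n x ∧ Vanish ℬ A x t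
  · left
    obtain ⟨x₁, t₁, hx₁, ht₁, hv₁⟩ := hcl
    refine fun x t hx => ⟨hlow x t hx, fun hle => ?_⟩
    have hv := hpt n x₁ t₁ x ⟨g n x, hg0 x hx n⟩ hx₁ hx ht₁ rfl hv₁
    exact hv.mono (NNReal.coe_le_coe.1 hle)
  · right
    have hlow' : ∀ x t : ℝ≥0, (x : ℝ) ∈ P → Vanish ℬ A x t → g n x < t := fun x t hx hv =>
      (hlow x t hx hv).lt_of_ne fun e => hcl ⟨x, t, hx, e.symm, hv⟩
    refine fun x t hx => ⟨hlow' x t hx, fun hlt => ?_⟩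
    obtain ⟨s, hs1, hs2⟩ := exists_between (lt_min hlt (hmono x hx n))
    have hs0 : 0 ≤ s := (hg0 x hx n).trans hs1.le
    have hv := hopen n x₀ t₀ x ⟨s, hs0⟩ hx₀ hx (hlow' x₀ t₀ hx₀ hv₀) ht₀ hs1
      (hs2.trans_le (min_le_right _ _)) hv₀
    exact hv.mono (NNReal.coe_le_coe.1 (hs2.trans_le (min_le_left _ _)).le)

/-- A piece on which only the integral region of `t` matters. -/
theorem good_of_const {P : Set ℝ}
    (hpt : ∀ x x' t : ℝ≥0, (x : ℝ) ∈ P → (x' : ℝ) ∈ P → Vanish ℬ A x t → Vanish ℬ A x' t)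
    (hopen : ∀ n : ℕ, ∀ x t t' : ℝ≥0, (x : ℝ) ∈ P → (n : ℝ) < t → (t : ℝ) < n + 1 →
      (n : ℝ) < t' → (t' : ℝ) < n + 1 → Vanish ℬ A x t →
      ∃ x' : ℝ≥0, (x' : ℝ) ∈ P ∧ Vanish ℬ A x' t') :
    VanishGoodOn ℬ A P := by
  refine good_of_chain (fun n _ => (n : ℝ)) (fun n => ⟨n, 0, Or.inl rfl, by simp⟩) (by simp)
    (by simp) ?_ ?_ ?_
  · intro x _ t
    obtain ⟨n, hn⟩ := exists_nat_gt t
    exact ⟨n, by push_cast; linarith⟩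
  · intro n x t x' t' hx hx' ht ht' hv
    have : t' = t := NNReal.coe_injective (by rw [ht, ht'])
    rw [this]
    exact hpt x x' t hx hx' hv
  · intro n x t x' t' hx hx' h1 h2 h3 h4 hv
    push_cast at h2 h4
    obtain ⟨x'', hx'', hv''⟩ := hopen n x t t' hx h1 h2 h3 h4 hv
    exact hpt x'' x' t' hx'' hx' hv''

theorem good_singleton (hℬ : BoundedBy ℬ M) (i : ℕ) : VanishGoodOn ℬ A {(i : ℝ)} := by
  apply good_of_const
  · intro x x' t hx hx' hv
    have : x' = x := NNReal.coe_injective (by rw [hx, hx'])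
    rwa [this]
  · intro n x t t' hx h1 h2 h3 h4 hv
    have hx : (x : ℝ) = i := hx
    obtain ⟨h, hh, hu, ha, hb⟩ := exists_bump (a := 0) (b := 1) (u := t - n) (v := t' - n)
      (by linarith) (by linarith) (by linarith) (by linarith)
    have h00 := ha 0 le_rfl
    exact ⟨x, hx, vanish_fract hℬ hh h00 (hb 1 le_rfl) (m := i) (j := n) (p := 0)
      (q := t - n) le_rfl one_pos (by linarith) (by linarith) (by linarith) (by ring)
      (by linarith) (by linarith) hv⟩

theorem good_Ioi (hℬ : BoundedBy ℬ M) : VanishGoodOn ℬ A (Set.Ioi (M : ℝ)) := by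
  apply good_of_const
  · intro x x' t hx hx' hv
    exact vanish_stretch hℬ hx hx' hv
  · intro n x t t' hx h1 h2 h3 h4 hv
    have hx : (M : ℝ) < x := hx
    obtain ⟨h, hh, hu, ha, hb⟩ := exists_bump (a := 0) (b := 1) (u := t - n) (v := t' - n)
      (by linarith) (by linarith) (by linarith) (by linarith)
    have h00 := ha 0 le_rfl
    -- the time scale also moves `x`, to a value `x''` that is still above `M`
    have hm1 : (x : ℝ) ≤ ⌈(x : ℝ)⌉₊ := Nat.le_ceil _
    have hm2 : (⌈(x : ℝ)⌉₊ : ℝ) < x + 1 := Nat.ceil_lt_add_one x.coe_nonneg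
    have hm3 : (M : ℝ) + 1 ≤ ⌈(x : ℝ)⌉₊ := by exact_mod_cast Nat.lt_ceil.2 hx
    have hp : h (⌈(x : ℝ)⌉₊ - x) < 1 := by
      rw [← hb 1 le_rfl]; exact hh (by linarith)
    have hM : (0 : ℝ) ≤ M := Nat.cast_nonneg M
    exact ⟨⟨⌈(x : ℝ)⌉₊ - h (⌈(x : ℝ)⌉₊ - x), by linarith⟩,
      show (M : ℝ) < ⌈(x : ℝ)⌉₊ - h (⌈(x : ℝ)⌉₊ - x) by linarith,
      vanish_fract hℬ hh h00 (hb 1 le_rfl) (m := ⌈(x : ℝ)⌉₊) (j := n) (p := ⌈(x : ℝ)⌉₊ - x)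
      (q := t - n) (by linarith) (by linarith) (by linarith) (by linarith) (by ring) (by ring)
      rfl (by linarith) hv⟩

/-- On `(i, i+1)` write `x = i + 1 - p` and `t = j + q` with `q` in the unit interval. The cells
are given by `j` and the position of `q` relative to `0` and `p`; the lines `q = 0` and `q = p`
are `t = j` and `t = (i + j + 1) - x`. -/
theorem good_Ioo (hℬ : BoundedBy ℬ M) (i : ℕ) :
    VanishGoodOn ℬ A (Set.Ioo (i : ℝ) (i + 1)) := by
  -- replaces `x` by any other value of the piece, at the cost of moving `q` to `h q`, where `h`
  -- keeps the position of `q` relative to `0` and `p`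
  have key : ∀ x x' : ℝ≥0, (x : ℝ) ∈ Set.Ioo (i : ℝ) (i + 1) →
      (x' : ℝ) ∈ Set.Ioo (i : ℝ) (i + 1) →
      ∃ h : ℝ → ℝ, StrictMono h ∧ h 0 = 0 ∧ h 1 = 1 ∧ h (i + 1 - x) = i + 1 - x' ∧
        ∀ (j : ℕ) (q : ℝ) (t t' : ℝ≥0), 0 ≤ q → q < 1 → (t : ℝ) = j + q → (t' : ℝ) = j + h q →
          Vanish ℬ A x t → Vanish ℬ A x' t' := by
    rintro x x' ⟨hx1, hx2⟩ ⟨hx3, hx4⟩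
    obtain ⟨h, hh, hu, ha, hb⟩ := exists_bump (a := 0) (b := 1) (u := i + 1 - x)
      (v := i + 1 - x') (by linarith) (by linarith) (by linarith) (by linarith)
    refine ⟨h, hh, ha 0 le_rfl, hb 1 le_rfl, hu, ?_⟩
    intro j q t t' hq hq1 ht ht' hv
    exact vanish_fract hℬ hh (ha 0 le_rfl) (hb 1 le_rfl) (m := i + 1) (j := j)
      (p := i + 1 - x) (q := q) (by linarith) (by linarith) hq hq1 (by push_cast; ring) ht
      (by rw [hu]; push_cast; ring) ht' hv
  -- moves `q` while `x` is kept, in an interval `(a, b)` that does not contain `p`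
  have key2 : ∀ (x t t' : ℝ≥0) (j : ℕ) (q q' a b : ℝ), (x : ℝ) ∈ Set.Ioo (i : ℝ) (i + 1) →
      0 ≤ a → b ≤ 1 → a < q → q < b → a < q' → q' < b → (i + 1 - x ≤ a ∨ b ≤ i + 1 - x) →
      (t : ℝ) = j + q → (t' : ℝ) = j + q' → Vanish ℬ A x t → Vanish ℬ A x t' := by
    rintro x t t' j q q' a b ⟨hx1, hx2⟩ ha0 hb1 h1 h2 h3 h4 hp ht ht' hv
    obtain ⟨h, hh, hu, ha, hb⟩ := exists_bump h1 h2 h3 h4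
    have hpp : h (i + 1 - x) = i + 1 - x := hp.elim (ha _) (hb _)
    exact vanish_fract hℬ hh (ha 0 ha0) (hb 1 hb1) (m := i + 1) (j := j)
      (p := i + 1 - x) (q := q) (by linarith) (by linarith) (by linarith) (by linarith)
      (by push_cast; ring) ht (by rw [hpp]; push_cast; ring) (by rw [hu, ht']) hv
  let g : ℕ → ℝ → ℝ := fun n x =>
    if Even n then ((n / 2 : ℕ) : ℝ) else ((n / 2 : ℕ) : ℝ) + (i + 1 - x)
  have ge : ∀ j x, g (2 * j) x = j := fun j x => by simp [g]
  have go : ∀ j x, g (2 * j + 1) x = j + (i + 1 - x) := fun j x => by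
    have : (2 * j + 1) / 2 = j := by omega
    simp [g, this]
  have ge' : ∀ j x, g (2 * j + 1 + 1) x = j + 1 := fun j x => by
    rw [show 2 * j + 1 + 1 = 2 * (j + 1) by ring, ge]; push_cast; rfl
  have par : ∀ n : ℕ, ∃ j, n = 2 * j ∨ n = 2 * j + 1 := fun n => ⟨n / 2, by omega⟩
  refine good_of_chain g ?_ ?_ ?_ ?_ ?_ ?_
  · intro n
    obtain ⟨j, rfl | rfl⟩ := par n
    · exact ⟨j, 0, Or.inl rfl, fun x => by rw [ge]; ring⟩
    · exact ⟨j + i + 1, 1, Or.inr rfl, fun x => by rw [go]; ring⟩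
  · intro x _
    simpa using ge 0 x
  · rintro x ⟨hx1, hx2⟩ n
    obtain ⟨j, rfl | rfl⟩ := par n
    · rw [ge, go]; linarith
    · rw [go, ge']; linarith
  · intro x _ t
    obtain ⟨n, hn⟩ := exists_nat_gt t
    exact ⟨2 * n + 1, by rw [ge']; linarith⟩
  · intro n x t x' t' hx hx' ht ht' hv
    obtain ⟨h, hh, h0, h1, hp, hk⟩ := key x x' hx hx'
    obtain ⟨j, rfl | rfl⟩ := par n
    · rw [ge] at ht ht'
      exact hk j 0 t t' le_rfl one_pos (by linarith) (by linarith) hv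
    · rw [go] at ht ht'
      exact hk j (i + 1 - x) t t' (by linarith [hx.2]) (by linarith [hx.1]) ht
        (by rw [hp, ht']) hv
  · intro n x t x' t' hx hx' h1 h2 h3 h4 hv
    obtain ⟨h, hh, h00, h11, hp, hk⟩ := key x x' hx hx'
    have hx1 := hx.1
    have hx2 := hx.2
    have hx3 := hx'.1
    have hx4 := hx'.2
    obtain ⟨j, rfl | rfl⟩ := par n
    · rw [ge] at h1 h3
      rw [go] at h2 h4
      have e1 : 0 < h (t - j) := h00 ▸ hh (by linarith)
      have e2 : h (t - j) < i + 1 - x' := hp ▸ hh (by linarith)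
      have hv1 := hk j (t - j) t ⟨j + h (t - j), by positivity⟩ (by linarith) (by linarith)
        (by ring) rfl hv
      exact key2 x' _ t' j (h (t - j)) (t' - j) 0 (i + 1 - x') hx' le_rfl (by linarith) e1 e2
        (by linarith) (by linarith) (Or.inr le_rfl) rfl (by ring) hv1
    · rw [go] at h1 h3
      rw [ge'] at h2 h4
      have e1 : i + 1 - x' < h (t - j) := hp ▸ hh (by linarith)
      have e2 : h (t - j) < 1 := h11 ▸ hh (by linarith)
      have e3 : 0 ≤ h (t - j) := by linarith
      have hv1 := hk j (t - j) t ⟨j + h (t - j), by positivity⟩ (by linarith) (by linarith)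
        (by ring) rfl hv
      exact key2 x' _ t' j (h (t - j)) (t' - j) (i + 1 - x') 1 hx' (by linarith) le_rfl e1 e2
        (by linarith) (by linarith) (Or.inl le_rfl) rfl (by ring) hv1

end TBPPcore

open TBPPcore in
/-- for every one-clock TBPP `ℬ` and nonterminal `A`, the
vanishing predicate `VAN_A(x,t) ⇔ {(A,x)} →*(t) ∅` is piecewise of the form
`t ≥ c − b·x` (or `t > c − b·x`, or empty) with `b ∈ {0,1}`, on a finite
partition `{a₀}, (a₀,a₁), {a₁}, …, {a_k}, (a_k, ∞)` of `ℝ≥0` with `a₀ = 0`. -/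
theorem vanish_piecewise_linear
    {X : Type} [Fintype X] (ℬ : TBPP Unit X) (A : X) :
    ∃ (k : ℕ) (a : Fin (k + 1) → ℝ), a 0 = 0 ∧ StrictMono a ∧
      (∀ i : Fin (k + 1), VanishGoodOn ℬ A {a i}) ∧
      (∀ i : Fin k, VanishGoodOn ℬ A (Set.Ioo (a i.castSucc) (a i.succ))) ∧
      VanishGoodOn ℬ A (Set.Ioi (a (Fin.last k))) := by
  obtain ⟨M, hM⟩ := exists_boundedBy ℬ
  refine ⟨M, fun i => ((i : ℕ) : ℝ), by simp, ?_, ?_, ?_, ?_⟩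
  · intro i j hij
    exact Nat.cast_lt.2 hij
  · intro i
    exact good_singleton hM i
  · intro i
    simpa using good_Ioo (A := A) hM (i : ℕ)
  · simpa using good_Ioi (A := A) hM
end
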